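/- Let S be the group with presentation ⟨x, {u_k, v_k}_{k∈N} | x³ = u_k^{3^k} = v_k^{3^k} = 1, u_{k+1}³ = u_k, v_{k+1}³ = v_k, [u_k,x] = v_k, [v_k,x] = (u_k v_k)^{-3}, [u_k,v_k] = 1⟩, an extension of Z/3 by T = (Z(3^∞))². Then the center of S is the cyclic group of order 3 generated by v_1. -/

import Mathlib

/-- Generators of the discrete 3-toral group `S`: `x` and `u_k`, `v_k` for `k ∈ ℕ`. -/
inductive SGen
  | x : SGen
  | u : ℕ → SGen
  | v : ℕ → SGen

namespace SGen

def X : FreeGroup SGen := FreeGroup.of SGen.x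
def U (k : ℕ) : FreeGroup SGen := FreeGroup.of (SGen.u k)
def V (k : ℕ) : FreeGroup SGen := FreeGroup.of (SGen.v k)

/-- The relations of the presentation
`⟨x, {u_k, v_k} | x³ = u_k^{3^k} = v_k^{3^k} = 1, u_{k+1}³ = u_k, v_{k+1}³ = v_k,
[u_k,x] = v_k, [v_k,x] = (u_k v_k)^{-3}, [u_k,v_k] = 1⟩`,
where `[a,b] = a⁻¹b⁻¹ab`. -/
def SRels : Set (FreeGroup SGen) :=
  {g | g = X ^ 3 ∨ ∃ k : ℕ,
    g = U k ^ 3 ^ k ∨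
    g = V k ^ 3 ^ k ∨
    g = U (k + 1) ^ 3 * (U k)⁻¹ ∨
    g = V (k + 1) ^ 3 * (V k)⁻¹ ∨
    g = (U k)⁻¹ * X⁻¹ * U k * X * (V k)⁻¹ ∨
    g = (V k)⁻¹ * X⁻¹ * V k * X * (U k * V k) ^ 3 ∨
    g = (U k)⁻¹ * (V k)⁻¹ * U k * V k}

/-- The discrete `3`-toral group `S` of rank 2, an extension of `ℤ/3` by
`T = (ℤ(3^∞))²`, given by the above presentation. -/
def SGroup : Type := PresentedGroup SRels

instance : Group SGroup := by unfold SGroup; infer_instance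

end SGen

/-! With `ω` a primitive cube root of unity, let `T = ℤ[ω][1/3] / ℤ[ω]`, with `u_k` the class of
`3⁻ᵏ` and `v_k` that of `(ω - 1) 3⁻ᵏ`. Since `ω (ω - 1) = -3 - 2 (ω - 1)`, the relations say that
`x⁻¹ (u_k^a v_k^b) x = u_k^(a - 3b) v_k^(a - 2b)`, i.e. that conjugation by `x⁻¹` is multiplication
by `ω`. Hence `T` is normal and every element of `S` has the form `t x^i` with `t ∈ T`. As `x` does
not commute with `u_1`, a central element lies in `T`, so the center is the group of fixed points of
`ω` on `T`, the kernel of `ω - 1`. Computing it requires that `u_k` and `v_k` are independent of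
order `3^k` in `S`, which is seen by letting `S` act on `(ℚ/ℤ)²` by affine permutations. -/

open Subgroup

section CommutingElements

variable {G : Type*} [Group G] {a b : G}

theorem zpow_mul_zpow_mul_zpow_mul_zpow (h : Commute a b) (m n m' n' : ℤ) :
    a ^ m * b ^ n * (a ^ m' * b ^ n') = a ^ (m + m') * b ^ (n + n') := by
  rw [(h.symm.zpow_zpow n m').mul_mul_mul_comm, zpow_add, zpow_add]

theorem zpow_mul_zpow_zpow (h : Commute a b) (m n k : ℤ) :
    (a ^ m * b ^ n) ^ k = a ^ (m * k) * b ^ (n * k) := by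
  rw [(h.zpow_zpow m n).mul_zpow, zpow_mul, zpow_mul]

theorem zpowers_sup_zpowers_eq_range (h : Commute a b) :
    zpowers a ⊔ zpowers b = ((zpowersHom G a).noncommCoprod (zpowersHom G b)
      fun m n => by simpa using h.zpow_zpow m.toAdd n.toAdd).range := by
  rw [MonoidHom.noncommCoprod_range, range_zpowersHom, range_zpowersHom]

theorem mem_zpowers_sup_zpowers_iff (h : Commute a b) {g : G} :
    g ∈ zpowers a ⊔ zpowers b ↔ ∃ m n : ℤ, a ^ m * b ^ n = g := by
  simp [zpowers_sup_zpowers_eq_range h, Prod.exists]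

theorem isMulCommutative_zpowers_sup_zpowers (h : Commute a b) :
    IsMulCommutative (zpowers a ⊔ zpowers b : Subgroup G) :=
  zpowers_sup_zpowers_eq_range h ▸ inferInstance

theorem commute_of_commute_zpow {n : ℕ} {i : ℤ} (han : a ^ n = 1) (hi : IsCoprime i n)
    (h : Commute (a ^ i) b) : Commute a b := by
  obtain ⟨r, s, hrs⟩ := hi
  have ha : (a ^ i) ^ r = a := by
    rw [← zpow_mul, mul_comm, eq_sub_of_add_eq hrs, zpow_sub, mul_comm s, zpow_mul, zpow_natCast,
      han, one_zpow, inv_one, mul_one, zpow_one]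
  exact ha ▸ h.zpow_left r

end CommutingElements

section Towers

variable {M : Type*} [Monoid M] {w : ℕ → M} {p : ℕ}

theorem pow_pow_of_pow_succ_eq (hw : ∀ k, w (k + 1) ^ p = w k) (k d : ℕ) :
    w (k + d) ^ p ^ d = w k := by
  induction d with
  | zero => simp
  | succ d ih => rw [pow_succ', pow_mul, ← add_assoc, hw, ih]

theorem monotone_zpowers_of_pow_succ_eq {G : Type*} [Group G] {w : ℕ → G}
    (hw : ∀ k, w (k + 1) ^ p = w k) : Monotone fun k => zpowers (w k) :=
  monotone_nat_of_le_succ fun k => zpowers_le.2 (hw k ▸ npow_mem_zpowers _ _)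

/-- The class of `p⁻ᵏ` in `ℚ / ℤ`; these classes generate the Prüfer `p`-group. -/
def invPow (p k : ℕ) : AddCircle (1 : ℚ) :=
  (1 / (p ^ k : ℕ) : ℚ)

theorem addOrderOf_invPow (hp : 0 < p) (k : ℕ) : addOrderOf (invPow p k) = p ^ k :=
  AddCircle.addOrderOf_period_div (by positivity)

theorem nsmul_invPow_succ (hp : 0 < p) (k : ℕ) : p • invPow p (k + 1) = invPow p k := by
  rw [invPow, invPow, ← AddCircle.coe_nsmul]
  congr 1
  simp only [nsmul_eq_mul, pow_succ, Nat.cast_mul]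
  field_simp

end Towers

namespace SGen.SGroup

/-- The generator `x` of `S`. -/
abbrev x : PresentedGroup SRels := .of .x

/-- The generator `u_k` of `S`. -/
abbrev u (k : ℕ) : PresentedGroup SRels := .of (.u k)

/-- The generator `v_k` of `S`. -/
abbrev v (k : ℕ) : PresentedGroup SRels := .of (.v k)

theorem x_pow_three : x ^ 3 = 1 :=
  PresentedGroup.one_of_mem (rels := SRels) (.inl rfl)

theorem u_pow (k : ℕ) : u k ^ 3 ^ k = 1 :=
  PresentedGroup.one_of_mem (rels := SRels) (x := U k ^ 3 ^ k) (.inr ⟨k, by tauto⟩)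

theorem v_pow (k : ℕ) : v k ^ 3 ^ k = 1 :=
  PresentedGroup.one_of_mem (rels := SRels) (x := V k ^ 3 ^ k) (.inr ⟨k, by tauto⟩)

theorem u_succ_pow_three (k : ℕ) : u (k + 1) ^ 3 = u k :=
  PresentedGroup.mk_eq_mk_of_mul_inv_mem (rels := SRels) (x := U (k + 1) ^ 3) (y := U k)
    (.inr ⟨k, by tauto⟩)

theorem v_succ_pow_three (k : ℕ) : v (k + 1) ^ 3 = v k :=
  PresentedGroup.mk_eq_mk_of_mul_inv_mem (rels := SRels) (x := V (k + 1) ^ 3) (y := V k)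
    (.inr ⟨k, by tauto⟩)

theorem commute_u_v (k : ℕ) : Commute (u k) (v k) := by
  have h : (u k)⁻¹ * (v k)⁻¹ * u k * v k = 1 := PresentedGroup.one_of_mem (rels := SRels)
    (x := (U k)⁻¹ * (V k)⁻¹ * U k * V k) (.inr ⟨k, by tauto⟩)
  rwa [mul_assoc, ← mul_inv_rev, inv_mul_eq_one, eq_comm] at h

theorem x_inv_mul_u_mul_x (k : ℕ) : x⁻¹ * u k * x = u k * v k := by
  have h : (u k)⁻¹ * x⁻¹ * u k * x = v k := PresentedGroup.mk_eq_mk_of_mul_inv_mem (rels := SRels)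
    (x := (U k)⁻¹ * X⁻¹ * U k * X) (y := V k) (.inr ⟨k, by tauto⟩)
  rw [← h]
  group

theorem x_inv_mul_v_mul_x (k : ℕ) : x⁻¹ * v k * x = u k ^ (-3 : ℤ) * v k ^ (-2 : ℤ) := by
  have h : (v k)⁻¹ * x⁻¹ * v k * x * (u k * v k) ^ 3 = 1 :=
    PresentedGroup.one_of_mem (rels := SRels)
      (x := (V k)⁻¹ * X⁻¹ * V k * X * (U k * V k) ^ 3) (.inr ⟨k, by tauto⟩)
  calc x⁻¹ * v k * x = v k * ((v k)⁻¹ * x⁻¹ * v k * x) := by group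
    _ = v k * (u k * v k) ^ (-3 : ℤ) := by rw [eq_inv_of_mul_eq_one_left h]; norm_cast
    _ = u k ^ (-3 : ℤ) * v k ^ (-2 : ℤ) := by
      rw [(commute_u_v k).mul_zpow, ((commute_u_v k).symm.zpow_right (-3)).left_comm,
        ← zpow_one_add]
      norm_num

theorem x_inv_mul_zpow_mul_zpow_mul_x (k : ℕ) (a b : ℤ) :
    x⁻¹ * (u k ^ a * v k ^ b) * x = u k ^ (a - 3 * b) * v k ^ (a - 2 * b) := by
  have conj_zpow_x (g : PresentedGroup SRels) (n : ℤ) : x⁻¹ * g ^ n * x = (x⁻¹ * g * x) ^ n := by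
    simpa using (conj_zpow (a := x⁻¹) (b := g) (i := n)).symm
  calc x⁻¹ * (u k ^ a * v k ^ b) * x = (x⁻¹ * u k ^ a * x) * (x⁻¹ * v k ^ b * x) := by group
    _ = (u k * v k) ^ a * (u k ^ (-3 : ℤ) * v k ^ (-2 : ℤ)) ^ b := by
      rw [conj_zpow_x, conj_zpow_x, x_inv_mul_u_mul_x, x_inv_mul_v_mul_x]
    _ = u k ^ (a + -3 * b) * v k ^ (a + -2 * b) := by
      rw [(commute_u_v k).mul_zpow, zpow_mul_zpow_zpow (commute_u_v k),
        zpow_mul_zpow_mul_zpow_mul_zpow (commute_u_v k)]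
    _ = u k ^ (a - 3 * b) * v k ^ (a - 2 * b) := by simp only [neg_mul, sub_eq_add_neg]

section Torus

/-- The maximal torus `T = ⟨{u_k, v_k}⟩` of `S`, as the increasing union of the subgroups
`⟨u_k, v_k⟩`. -/
def torus : Subgroup (PresentedGroup SRels) :=
  ⨆ k, zpowers (u k) ⊔ zpowers (v k)

theorem monotone_zpowers_u_sup_zpowers_v :
    Monotone fun k => zpowers (u k) ⊔ zpowers (v k) :=
  (monotone_zpowers_of_pow_succ_eq u_succ_pow_three).sup
    (monotone_zpowers_of_pow_succ_eq v_succ_pow_three)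

instance : IsMulCommutative torus :=
  have (k : ℕ) := isMulCommutative_zpowers_sup_zpowers (commute_u_v k)
  isMulCommutative_iSup monotone_zpowers_u_sup_zpowers_v.directed_le

theorem mem_torus_iff {t : PresentedGroup SRels} :
    t ∈ torus ↔ ∃ (k : ℕ) (a b : ℤ), u k ^ a * v k ^ b = t := by
  simp only [torus, mem_iSup_of_directed monotone_zpowers_u_sup_zpowers_v.directed_le,
    mem_zpowers_sup_zpowers_iff (commute_u_v _)]

theorem u_mem_torus (k : ℕ) : u k ∈ torus :=
  mem_torus_iff.2 ⟨k, 1, 0, by simp⟩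

theorem v_mem_torus (k : ℕ) : v k ∈ torus :=
  mem_torus_iff.2 ⟨k, 0, 1, by simp⟩

theorem x_mem_normalizer_torus : x ∈ normalizer (torus : Set (PresentedGroup SRels)) := by
  simp only [mem_normalizer_iff'', mem_torus_iff]
  refine fun t => ⟨?_, ?_⟩
  · rintro ⟨k, a, b, rfl⟩
    exact ⟨k, _, _, (x_inv_mul_zpow_mul_zpow_mul_x k a b).symm⟩
  · rintro ⟨k, a, b, h⟩
    refine ⟨k, -2 * a + 3 * b, -a + b, ?_⟩
    rw [← mul_left_inj x, ← mul_right_inj x⁻¹, ← mul_assoc, x_inv_mul_zpow_mul_zpow_mul_x,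
      ← mul_assoc, ← h]
    ring_nf

instance : torus.Normal := by
  refine normalizer_eq_top_iff.1 <| (eq_top_iff' _).2 <| PresentedGroup.generated_by _ _ ?_
  rintro (_ | k | k)
  · exact x_mem_normalizer_torus
  · exact le_normalizer (u_mem_torus k)
  · exact le_normalizer (v_mem_torus k)

theorem exists_mem_torus_mul_x_zpow (g : PresentedGroup SRels) :
    ∃ t ∈ torus, ∃ i : ℤ, t * x ^ i = g := by
  have hg : g ∈ torus ⊔ zpowers x := by
    refine PresentedGroup.generated_by _ _ ?_ g
    rintro (_ | k | k)
    · exact mem_sup_right (mem_zpowers x)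
    · exact mem_sup_left (u_mem_torus k)
    · exact mem_sup_left (v_mem_torus k)
  simpa only [mem_sup_of_normal_left, exists_mem_zpowers] using hg

end Torus

section Model

variable {M : Type*} [AddCommGroup M] {c : ℕ → M}

/-- Multiplication by a primitive cube root of unity `ω` on `M ⊗ ℤ[ω]`, identified with `M × M`
by means of the basis `1, ω - 1` of `ℤ[ω]`. -/
@[simps]
def mulOmega (M : Type*) [AddCommGroup M] : Equiv.Perm (M × M) where
  toFun p := (p.1 - 3 • p.2, p.1 - 2 • p.2)
  invFun p := (-2 • p.1 + 3 • p.2, -p.1 + p.2)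
  left_inv p := by ext <;> simp <;> abel
  right_inv p := by ext <;> simp <;> abel

/-- The affine permutations of `M × M` by which the generators of `S` act: `x` as `ω⁻¹`, `u_k` and
`v_k` as the translations by `c_k` in the two coordinates. -/
def affineGen (c : ℕ → M) : SGen → Equiv.Perm (M × M)
  | .x => (mulOmega M)⁻¹
  | .u k => Equiv.addRight (c k, 0)
  | .v k => Equiv.addRight (0, c k)

theorem mulOmega_pow_three : mulOmega M ^ 3 = 1 := by
  ext p <;> simp [pow_succ] <;> abel

theorem mulOmega_mul_addRight_mul_inv (w : M × M) :
    mulOmega M * Equiv.addRight w * (mulOmega M)⁻¹ = Equiv.addRight (mulOmega M w) := by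
  rw [mul_inv_eq_iff_eq_mul]
  ext p <;> simp <;> abel

theorem lift_affineGen_eq_one (hc : ∀ k, 3 • c (k + 1) = c k) (hc0 : ∀ k, 3 ^ k • c k = 0) :
    ∀ r ∈ SRels, FreeGroup.lift (affineGen c) r = 1 := by
  rintro r (rfl | ⟨k, rfl | rfl | rfl | rfl | rfl | rfl | rfl⟩) <;>
    simp only [X, U, V, map_mul, map_inv, map_pow, FreeGroup.lift_apply_of, affineGen, inv_inv]
  · rw [inv_pow, mulOmega_pow_three, inv_one]
  · simp [hc0, Prod.mk_zero_zero]
  · simp [hc0, Prod.mk_zero_zero]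
  · simp [hc, ← Equiv.addRight_add, Prod.mk_zero_zero]
  · simp [hc, ← Equiv.addRight_add, Prod.mk_zero_zero]
  · rw [mul_assoc _ (mulOmega M), mul_assoc _ (mulOmega M * _), mulOmega_mul_addRight_mul_inv]
    simp [← Equiv.addRight_add, Prod.mk_zero_zero]
  · have hck : 3 • c k + (-(2 • c k) + -c k) = 0 := by abel
    rw [mul_assoc _ (mulOmega M), mul_assoc _ (mulOmega M * _), mulOmega_mul_addRight_mul_inv]
    simp [← Equiv.addRight_add, hck, Prod.mk_zero_zero]
  · simp [← Equiv.addRight_add, Prod.mk_zero_zero]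

/-- The action of `S` on `M × M` by affine permutations that a sequence `c` in `M` with
`3 c_{k+1} = c_k` and `3^k c_k = 0` determines. -/
def affineHom (hc : ∀ k, 3 • c (k + 1) = c k) (hc0 : ∀ k, 3 ^ k • c k = 0) :
    PresentedGroup SRels →* Equiv.Perm (M × M) :=
  PresentedGroup.toGroup (lift_affineGen_eq_one hc hc0)

theorem affineHom_zpow_mul_zpow (hc : ∀ k, 3 • c (k + 1) = c k) (hc0 : ∀ k, 3 ^ k • c k = 0)
    (k : ℕ) (a b : ℤ) :
    affineHom hc hc0 (u k ^ a * v k ^ b) = Equiv.addRight (a • c k, b • c k) := by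
  simp [affineHom, affineGen, PresentedGroup.toGroup.of, ← Equiv.addRight_add]

end Model

theorem zpow_mul_zpow_eq_iff {k : ℕ} {a b a' b' : ℤ} :
    u k ^ a * v k ^ b = u k ^ a' * v k ^ b' ↔ a ≡ a' [ZMOD 3 ^ k] ∧ b ≡ b' [ZMOD 3 ^ k] := by
  have smul_eq_smul_iff (i j : ℤ) : i • invPow 3 k = j • invPow 3 k ↔ i ≡ j [ZMOD 3 ^ k] := by
    rw [zsmul_eq_zsmul_iff_modEq, addOrderOf_invPow three_pos, Nat.cast_pow, Nat.cast_ofNat]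
  constructor
  · intro h
    have h0 (k : ℕ) : 3 ^ k • invPow 3 k = 0 := by
      rw [← addOrderOf_invPow three_pos, addOrderOf_nsmul_eq_zero]
    have h := DFunLike.congr_fun (congrArg (affineHom (nsmul_invPow_succ three_pos) h0) h) 0
    simpa only [affineHom_zpow_mul_zpow, Equiv.coe_addRight, zero_add, Prod.mk.injEq,
      smul_eq_smul_iff] using h
  · rintro ⟨ha, hb⟩
    have zpow_eq {w : PresentedGroup SRels} (hw : w ^ 3 ^ k = 1) {i j : ℤ}
        (h : i ≡ j [ZMOD 3 ^ k]) : w ^ i = w ^ j :=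
      zpow_eq_zpow_iff_modEq.2 (h.of_dvd (mod_cast orderOf_dvd_of_pow_eq_one hw))
    rw [zpow_eq (u_pow k) ha, zpow_eq (v_pow k) hb]

theorem commute_x_iff {k : ℕ} {a b : ℤ} :
    Commute x (u k ^ a * v k ^ b) ↔ 3 ^ k ∣ a ∧ 3 ^ k ∣ 3 * b := by
  calc Commute x (u k ^ a * v k ^ b)
    _ ↔ u k ^ (a - 3 * b) * v k ^ (a - 2 * b) = u k ^ a * v k ^ b := by
      rw [← x_inv_mul_zpow_mul_zpow_mul_x, mul_assoc, inv_mul_eq_iff_eq_mul, eq_comm,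
        commute_iff_eq]
    _ ↔ 3 ^ k ∣ 3 * b ∧ 3 ^ k ∣ 3 * b - a := by
      rw [zpow_mul_zpow_eq_iff, Int.modEq_iff_dvd, Int.modEq_iff_dvd]
      ring_nf
    _ ↔ 3 ^ k ∣ a ∧ 3 ^ k ∣ 3 * b := by
      rw [and_comm, and_congr_left_iff]
      exact fun hb => dvd_sub_right hb

theorem not_commute_x_u_one : ¬ Commute x (u 1) := by
  have h : ¬ Commute x (u 1 ^ (1 : ℤ) * v 1 ^ (0 : ℤ)) := by
    rw [commute_x_iff]
    norm_num
  simpa using h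

theorem orderOf_v (k : ℕ) : orderOf (v k) = 3 ^ k := by
  refine Nat.dvd_antisymm (orderOf_dvd_of_pow_eq_one (v_pow k)) ?_
  have h := (zpow_mul_zpow_eq_iff (k := k) (a := 0) (b := orderOf (v k)) (a' := 0) (b' := 0)).1
    (by simp [pow_orderOf_eq_one])
  exact_mod_cast Int.modEq_zero_iff_dvd.1 h.2

theorem commute_of_mem_torus {s t : PresentedGroup SRels} (hs : s ∈ torus) (ht : t ∈ torus) :
    Commute s t :=
  setLike_mul_comm hs ht

theorem mem_torus_of_mem_center {g : PresentedGroup SRels}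
    (hg : g ∈ center (PresentedGroup SRels)) : g ∈ torus := by
  obtain ⟨t, ht, i, rfl⟩ := exists_mem_torus_mul_x_zpow g
  have hxi : Commute (x ^ i) (u 1) := by
    have h : Commute (t * x ^ i) (u 1) := (mem_center_iff.1 hg (u 1)).symm
    simpa using (commute_of_mem_torus ht (u_mem_torus 1)).inv_left.mul_left h
  have hi : (3 : ℤ) ∣ i := by
    by_contra hi
    have hcop : IsCoprime i (3 : ℕ) := ((Int.prime_three.coprime_iff_not_dvd).2 hi).symm
    exact not_commute_x_u_one (commute_of_commute_zpow x_pow_three hcop hxi)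
  obtain ⟨j, rfl⟩ := hi
  rwa [zpow_mul, zpow_ofNat, x_pow_three, one_zpow, mul_one]

theorem mem_center_iff_mem_torus_and_commute_x {g : PresentedGroup SRels} :
    g ∈ center (PresentedGroup SRels) ↔ g ∈ torus ∧ Commute x g := by
  refine ⟨fun hg => ⟨mem_torus_of_mem_center hg, mem_center_iff.1 hg x⟩, ?_⟩
  rintro ⟨hg, hx⟩
  refine mem_center_iff.2 fun h => ?_
  obtain ⟨t, ht, i, rfl⟩ := exists_mem_torus_mul_x_zpow h
  exact (commute_of_mem_torus ht hg).mul_left (hx.zpow_left i)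

theorem v_one_mem_center : v 1 ∈ center (PresentedGroup SRels) := by
  have h : Commute x (u 1 ^ (0 : ℤ) * v 1 ^ (1 : ℤ)) := commute_x_iff.2 (by norm_num)
  exact mem_center_iff_mem_torus_and_commute_x.2 ⟨v_mem_torus 1, by simpa using h⟩

theorem center_le_zpowers_v_one : center (PresentedGroup SRels) ≤ zpowers (v 1) := by
  intro g hg
  obtain ⟨hg, hx⟩ := mem_center_iff_mem_torus_and_commute_x.1 hg
  obtain ⟨k, a, b, rfl⟩ := mem_torus_iff.1 hg
  obtain ⟨⟨m, rfl⟩, n, hn⟩ := commute_x_iff.1 hx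
  have hu : u k ^ (3 ^ k * m) = 1 := by
    have huk : u k ^ (3 ^ k : ℤ) = 1 := mod_cast u_pow k
    rw [zpow_mul, huk, one_zpow]
  have hv : v k ^ b = v 1 ^ n := calc
    v k ^ b = v (1 + k) ^ (3 * b) := by
      rw [zpow_mul, zpow_ofNat, add_comm, v_succ_pow_three]
    _ = v 1 ^ n := by
      rw [hn, zpow_mul, ← pow_pow_of_pow_succ_eq v_succ_pow_three 1 k]
      norm_cast
  exact ⟨n, by rw [hu, hv, one_mul]⟩

end SGen.SGroup

/-- The center of `S` is the cyclic group of order 3 generated by `v₁`. -/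
theorem SGroup_center :
    Subgroup.center SGen.SGroup =
      Subgroup.zpowers (PresentedGroup.of (rels := SGen.SRels) (SGen.v 1)) ∧
    orderOf (PresentedGroup.of (rels := SGen.SRels) (SGen.v 1)) = 3 := by
  exact ⟨le_antisymm SGen.SGroup.center_le_zpowers_v_one
    (zpowers_le.2 SGen.SGroup.v_one_mem_center), SGen.SGroup.orderOf_v 1⟩
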